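/- Let R be a commutative ring, A = R[X_1,…,X_n], and 𝔪 = (X_1,…,X_n) ⊆ A. Let d ≥ 0. Suppose H = (H_1,…,H_n) is an n-tuple of polynomials each lying in 𝔪², and G = (G_1,…,G_n), G̃ = (G̃_1,…,G̃_n) are n-tuples of polynomials all of whose components lie in 𝔪, such that G_i ≡ G̃_i mod 𝔪^{d+1} for every i. Then for every j, substituting G into H_j and substituting G̃ into H_j give polynomials that are congruent modulo 𝔪^{d+2}: H_j(G_1,…,G_n) ≡ H_j(G̃_1,…,G̃_n) mod 𝔪^{d+2}. (This says that the chain of ideals A_i := 𝔪^{i+1} is a composition-filtration.) -/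

import Mathlib

/-!
For `p, q ∈ 𝔪` the identity
`p(G) q(G) - p(G') q(G') = (p(G) - p(G')) q(G') + (q(G) - q(G')) p(G)`
pairs each difference, which lies in `𝔪 ^ (d + 1)`, with a value in `𝔪`. Such products `p q`
generate `𝔪 ^ 2`, and each further factor from `𝔪` gains one more power of `𝔪`.
-/

section RingHom

variable {A B F : Type*} [CommSemiring A] [CommRing B] [FunLike F A B] [RingHomClass F A B]
  {𝔞 : Ideal A} {I J : Ideal B} {φ ψ : F}

theorem map_sub_map_mem_mul_pow (hφ : 𝔞.map φ ≤ J) (hψ : 𝔞.map ψ ≤ J)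
    (hsub : ∀ x ∈ 𝔞, φ x - ψ x ∈ I) {k : ℕ} {x : A} (hx : x ∈ 𝔞 ^ (k + 1)) :
    φ x - ψ x ∈ I * J ^ k := by
  induction k generalizing x with
  | zero => simpa using hsub x (by simpa using hx)
  | succ k ih =>
    rw [pow_succ] at hx
    induction hx using Submodule.mul_induction_on' with
    | mem_mul_mem p hp q hq =>
      have hφp : φ p ∈ J ^ (k + 1) :=
        Ideal.pow_right_mono hφ (k + 1) (Ideal.map_pow φ 𝔞 (k + 1) ▸ Ideal.mem_map_of_mem φ hp)
      have hψq : ψ q ∈ J := hψ (Ideal.mem_map_of_mem ψ hq)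
      have hdiff_p : (φ p - ψ p) * ψ q ∈ I * J ^ (k + 1) := by
        rw [pow_succ, ← mul_assoc]
        exact Ideal.mul_mem_mul (ih hp) hψq
      have hdiff_q : (φ q - ψ q) * φ p ∈ I * J ^ (k + 1) := Ideal.mul_mem_mul (hsub q hq) hφp
      have htelescope : φ (p * q) - ψ (p * q) = (φ p - ψ p) * ψ q + (φ q - ψ q) * φ p := by
        rw [map_mul, map_mul]
        ring
      exact htelescope ▸ add_mem hdiff_p hdiff_q
    | add p _ q _ hp hq =>
      rw [map_add, map_add, add_sub_add_comm]
      exact add_mem hp hq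

end RingHom

section Aeval

open MvPolynomial

variable {R S σ : Type*} [CommSemiring R] [CommRing S] [Algebra R S] {I J : Ideal S} {a b : σ → S}

theorem aeval_sub_aeval_mem (hab : ∀ i, a i - b i ∈ I) (p : MvPolynomial σ R) :
    aeval a p - aeval b p ∈ I := by
  have hquot : (Ideal.Quotient.mkₐ R I).comp (aeval a) = (Ideal.Quotient.mkₐ R I).comp (aeval b) :=
    algHom_ext fun i ↦ by simpa using Ideal.Quotient.eq.mpr (hab i)
  exact Ideal.Quotient.eq.mp (DFunLike.congr_fun hquot p)

theorem map_aeval_idealOfVars_le (ha : ∀ i, a i ∈ J) :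
    (idealOfVars σ R).map (aeval a : MvPolynomial σ R →ₐ[R] S) ≤ J := by
  rw [idealOfVars, Ideal.map_span, Ideal.span_le]
  rintro _ ⟨_, ⟨i, rfl⟩, rfl⟩
  simpa using ha i

theorem varIdealPowers_compositionFiltration_general (ha : ∀ i, a i ∈ J) (hb : ∀ i, b i ∈ J)
    (hab : ∀ i, a i - b i ∈ I) {k : ℕ} {p : MvPolynomial σ R}
    (hp : p ∈ idealOfVars σ R ^ (k + 1)) :
    aeval a p - aeval b p ∈ I * J ^ k :=
  map_sub_map_mem_mul_pow (map_aeval_idealOfVars_le ha) (map_aeval_idealOfVars_le hb)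
    (fun q _ ↦ aeval_sub_aeval_mem hab q) hp

end Aeval

/-- The chain of ideals `A_i := 𝔪^{i+1}`, where `𝔪 = (X_1,…,X_n)`, is a
composition-filtration: if all components of `H` lie in `𝔪²`, all components of `G`, `G̃`
lie in `𝔪`, and `G_i ≡ G̃_i mod 𝔪^{d+1}` for all `i`, then
`H_j(G) ≡ H_j(G̃) mod 𝔪^{d+2}` for all `j`. -/
theorem varIdealPowers_compositionFiltration
    (R : Type*) [CommRing R] (n : ℕ) (d : ℕ)
    (𝔪 : Ideal (MvPolynomial (Fin n) R))
    (h𝔪 : 𝔪 = Ideal.span (Set.range (MvPolynomial.X : Fin n → MvPolynomial (Fin n) R)))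
    (H G G' : Fin n → MvPolynomial (Fin n) R)
    (hH : ∀ j, H j ∈ 𝔪 ^ 2)
    (hG : ∀ i, G i ∈ 𝔪) (hG' : ∀ i, G' i ∈ 𝔪)
    (hcong : ∀ i, G i - G' i ∈ 𝔪 ^ (d + 1)) :
    ∀ j, MvPolynomial.bind₁ G (H j) - MvPolynomial.bind₁ G' (H j) ∈ 𝔪 ^ (d + 2) := by
  obtain rfl : 𝔪 = MvPolynomial.idealOfVars (Fin n) R := h𝔪
  intro j
  rw [pow_add _ (d + 1) 1]
  exact varIdealPowers_compositionFiltration_general hG hG' hcong (hH j)
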